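/- Let α, β, κ : ℝ → ℝ be smooth 2π-periodic functions, and suppose g, h : ℝ → ℝ are smooth 2π-periodic functions with g_s = (1/2) α_sss + 2 κ α_s + κ_s α and h_s = (1/2) β_sss + 2 κ β_s + κ_s β. Then ∫₀^{2π} α ((1/2) h_sss + 2 κ h_s + κ_s h) ds = ∫₀^{2π} g h_s ds. In particular this expression is skew-symmetric under interchanging (α,g) and (β,h). -/

import Mathlib

/-!
Write `P κ = (1/2) D³ + 2 κ D + κ'` for the operator `Ω D`. It is formally skew-adjoint: by the
Lagrange identity, `u · P κ v + v · P κ u` is the derivative of the periodic function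
`(1/2) (u v'' - u' v' + u'' v) + 2 κ u v`. Hence, if `g' = P κ α`, moving `P κ` from `h` onto `α`
and integrating by parts once more gives `∫ α · P κ h = -∫ g' h = ∫ g h'`. Skew-symmetry of `ω₂` is
then that of the pairing `∫ g h'` of periodic functions.
-/

open Function

theorem periodic_deriv {𝕜 E : Type*} [NontriviallyNormedField 𝕜] [NormedAddCommGroup E]
    [NormedSpace 𝕜 E] {f : 𝕜 → E} {T : 𝕜} (hf : Periodic f T) : Periodic (deriv f) T := fun s => by
  rw [← deriv_comp_add_const, hf.funext]

theorem intervalIntegral_eq_zero_of_hasDerivAt_of_periodic {E : Type*} [NormedAddCommGroup E]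
    [NormedSpace ℝ E] [CompleteSpace E] {F f : ℝ → E} {T : ℝ}
    (hF : ∀ s, HasDerivAt F (f s) s) (hf : Continuous f) (hFper : Periodic F T) (a : ℝ) :
    ∫ s in a..a + T, f s = 0 := by
  rw [intervalIntegral.integral_eq_sub_of_hasDerivAt (fun s _ => hF s)
    (hf.intervalIntegrable _ _), hFper a, sub_self]

theorem integral_mul_deriv_eq_neg_of_periodic {A : Type*} [NormedRing A] [NormedAlgebra ℝ A]
    [CompleteSpace A] {u v : ℝ → A} {T : ℝ} (hu : ContDiff ℝ 1 u) (hv : ContDiff ℝ 1 v)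
    (huper : Periodic u T) (hvper : Periodic v T) (a : ℝ) :
    ∫ s in a..a + T, u s * deriv v s = -∫ s in a..a + T, deriv u s * v s := by
  rw [intervalIntegral.integral_mul_deriv_eq_deriv_mul
    (fun s _ => (hu.differentiable one_ne_zero s).hasDerivAt)
    (fun s _ => (hv.differentiable one_ne_zero s).hasDerivAt)
    (hu.continuous_deriv_one.intervalIntegrable _ _)
    (hv.continuous_deriv_one.intervalIntegrable _ _), huper a, hvper a, sub_self, zero_sub]

section KdV

variable {A : Type*} [NormedCommRing A] [NormedAlgebra ℝ A] {κ u v : ℝ → A} {T : ℝ}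

/-- The second Hamiltonian operator `Ω D = (1/2) D³ + 2 κ D + κ'` of the KdV equation, where `Ω` is
the recursion operator. Composing with `D` turns the nonlocal term `κ' D⁻¹` of `Ω` into
multiplication by `κ'`. The factor `1 / 2` is a real scalar because `A` need not have division. -/
noncomputable def kdvOperator (κ u : ℝ → A) (s : ℝ) : A :=
  (1 / 2 : ℝ) • deriv (deriv (deriv u)) s + 2 * κ s * deriv u s + deriv κ s * u s

/-- The bilinear concomitant of `kdvOperator κ`: the boundary term in its Lagrange identity
`hasDerivAt_kdvConcomitant`. -/
noncomputable def kdvConcomitant (κ u v : ℝ → A) (s : ℝ) : A :=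
  (1 / 2 : ℝ) • (u s * deriv (deriv v) s - deriv u s * deriv v s + deriv (deriv u) s * v s)
    + 2 * κ s * (u s * v s)

theorem continuous_kdvOperator (hκ : ContDiff ℝ 1 κ) (hu : ContDiff ℝ 3 u) :
    Continuous (kdvOperator κ u) := by
  have hu' : ContDiff ℝ 2 (deriv u) := hu.deriv'
  unfold kdvOperator
  fun_prop

theorem periodic_kdvConcomitant (hκ : Periodic κ T) (hu : Periodic u T) (hv : Periodic v T) :
    Periodic (kdvConcomitant κ u v) T := fun s => by
  have hu' := periodic_deriv hu
  have hv' := periodic_deriv hv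
  simp only [kdvConcomitant, hκ s, hu s, hv s, hu' s, hv' s, periodic_deriv hu' s,
    periodic_deriv hv' s]

theorem hasDerivAt_kdvConcomitant (hκ : Differentiable ℝ κ) (hu : ContDiff ℝ 3 u)
    (hv : ContDiff ℝ 3 v) (s : ℝ) :
    HasDerivAt (kdvConcomitant κ u v) (u s * kdvOperator κ v s + kdvOperator κ u s * v s) s := by
  have hasDerivAt_jet : ∀ {w : ℝ → A}, ContDiff ℝ 3 w →
      HasDerivAt w (deriv w s) s ∧ HasDerivAt (deriv w) (deriv (deriv w) s) s ∧
        HasDerivAt (deriv (deriv w)) (deriv (deriv (deriv w)) s) s := fun {w} hw => by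
    have hw' : ContDiff ℝ 2 (deriv w) := hw.deriv'
    have hw'' : ContDiff ℝ 1 (deriv (deriv w)) := hw'.deriv'
    exact ⟨(hw.differentiable three_ne_zero s).hasDerivAt,
      (hw'.differentiable two_ne_zero s).hasDerivAt,
      (hw''.differentiable one_ne_zero s).hasDerivAt⟩
  obtain ⟨du, du', du''⟩ := hasDerivAt_jet hu
  obtain ⟨dv, dv', dv''⟩ := hasDerivAt_jet hv
  have dκ := (hκ s).hasDerivAt
  refine (((((du.mul dv'').sub (du'.mul dv')).add (du''.mul dv)).const_smul (1 / 2 : ℝ)).add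
    ((dκ.const_mul 2).mul (du.mul dv))).congr_deriv ?_
  simp only [kdvOperator, Pi.mul_apply]
  algebra

variable [CompleteSpace A]

theorem integral_mul_kdvOperator_eq_neg (hκ : ContDiff ℝ 1 κ) (hu : ContDiff ℝ 3 u)
    (hv : ContDiff ℝ 3 v) (hκper : Periodic κ T) (huper : Periodic u T) (hvper : Periodic v T)
    (a : ℝ) :
    ∫ s in a..a + T, u s * kdvOperator κ v s = -∫ s in a..a + T, kdvOperator κ u s * v s := by
  have hu_Pv := hu.continuous.fun_mul (continuous_kdvOperator hκ hv)
  have hPu_v := (continuous_kdvOperator hκ hu).fun_mul hv.continuous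
  rw [eq_neg_iff_add_eq_zero, ← intervalIntegral.integral_add (hu_Pv.intervalIntegrable _ _)
    (hPu_v.intervalIntegrable _ _)]
  exact intervalIntegral_eq_zero_of_hasDerivAt_of_periodic
    (hasDerivAt_kdvConcomitant (hκ.differentiable one_ne_zero) hu hv) (hu_Pv.add hPu_v)
    (periodic_kdvConcomitant hκper huper hvper) a

theorem integral_mul_kdvOperator_eq_integral_mul_deriv {α g h : ℝ → A} (hκ : ContDiff ℝ 1 κ)
    (hα : ContDiff ℝ 3 α) (hg : ContDiff ℝ 1 g) (hh : ContDiff ℝ 3 h) (hκper : Periodic κ T)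
    (hαper : Periodic α T) (hgper : Periodic g T) (hhper : Periodic h T)
    (hgα : deriv g = kdvOperator κ α) (a : ℝ) :
    ∫ s in a..a + T, α s * kdvOperator κ h s = ∫ s in a..a + T, g s * deriv h s := by
  rw [integral_mul_kdvOperator_eq_neg hκ hα hh hκper hαper hhper, ← hgα,
    integral_mul_deriv_eq_neg_of_periodic hg (hh.of_le (by norm_num)) hgper hhper]

theorem omega2_formula_and_skew_general {α β g h : ℝ → A}
    (hα : ContDiff ℝ 3 α) (hβ : ContDiff ℝ 3 β) (hκ : ContDiff ℝ 1 κ)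
    (hg : ContDiff ℝ 3 g) (hh : ContDiff ℝ 3 h)
    (hαper : Periodic α T) (hβper : Periodic β T) (hκper : Periodic κ T)
    (hgper : Periodic g T) (hhper : Periodic h T)
    (hgα : deriv g = kdvOperator κ α) (hhβ : deriv h = kdvOperator κ β) (a : ℝ) :
    (∫ s in a..a + T, α s * kdvOperator κ h s = ∫ s in a..a + T, g s * deriv h s)
    ∧ (∫ s in a..a + T, α s * kdvOperator κ h s
      = -∫ s in a..a + T, β s * kdvOperator κ g s) := by
  have hg₁ : ContDiff ℝ 1 g := hg.of_le (by norm_num)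
  have hh₁ : ContDiff ℝ 1 h := hh.of_le (by norm_num)
  have formula_αh :=
    integral_mul_kdvOperator_eq_integral_mul_deriv hκ hα hg₁ hh hκper hαper hgper hhper hgα a
  have formula_βg :=
    integral_mul_kdvOperator_eq_integral_mul_deriv hκ hβ hh₁ hg hκper hβper hhper hgper hhβ a
  refine ⟨formula_αh, ?_⟩
  rw [formula_αh, formula_βg, integral_mul_deriv_eq_neg_of_periodic hg₁ hh₁ hgper hhper]
  simp only [mul_comm]

end KdV

/-- with 2π-periodic antiderivatives `g = D_s⁻¹ Ω α_s` and `h = D_s⁻¹ Ω β_s`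
(`g_s = (1/2) α_sss + 2 κ α_s + κ_s α`, `h_s = (1/2) β_sss + 2 κ β_s + κ_s β`),
one has `∫₀^{2π} α Ω h_s ds = ∫₀^{2π} g h_s ds`, and this expression is skew-symmetric
under interchanging `(α, g)` and `(β, h)`. -/
theorem omega2_formula_and_skew
    (α β κ g h : ℝ → ℝ)
    (hα : ContDiff ℝ (⊤ : ℕ∞) α)
    (hβ : ContDiff ℝ (⊤ : ℕ∞) β)
    (hκ : ContDiff ℝ (⊤ : ℕ∞) κ)
    (hg : ContDiff ℝ (⊤ : ℕ∞) g)
    (hh : ContDiff ℝ (⊤ : ℕ∞) h)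
    (hαper : ∀ s, α (s + 2 * Real.pi) = α s)
    (hβper : ∀ s, β (s + 2 * Real.pi) = β s)
    (hκper : ∀ s, κ (s + 2 * Real.pi) = κ s)
    (hgper : ∀ s, g (s + 2 * Real.pi) = g s)
    (hhper : ∀ s, h (s + 2 * Real.pi) = h s)
    (hgs : ∀ s, deriv g s =
      (1 / 2) * deriv (deriv (deriv α)) s + 2 * κ s * deriv α s + deriv κ s * α s)
    (hhs : ∀ s, deriv h s =
      (1 / 2) * deriv (deriv (deriv β)) s + 2 * κ s * deriv β s + deriv κ s * β s) :
    (∫ s in (0 : ℝ)..(2 * Real.pi),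
        α s * ((1 / 2) * deriv (deriv (deriv h)) s + 2 * κ s * deriv h s + deriv κ s * h s)
      = ∫ s in (0 : ℝ)..(2 * Real.pi), g s * deriv h s)
    ∧ (∫ s in (0 : ℝ)..(2 * Real.pi),
        α s * ((1 / 2) * deriv (deriv (deriv h)) s + 2 * κ s * deriv h s + deriv κ s * h s)
      = - ∫ s in (0 : ℝ)..(2 * Real.pi),
          β s * ((1 / 2) * deriv (deriv (deriv g)) s + 2 * κ s * deriv g s + deriv κ s * g s)) := by
  have of_smooth {f : ℝ → ℝ} (n : ℕ) (hf : ContDiff ℝ (⊤ : ℕ∞) f) : ContDiff ℝ n f :=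
    contDiff_infty.1 hf n
  simpa only [zero_add, kdvOperator, smul_eq_mul] using
    omega2_formula_and_skew_general (of_smooth 3 hα) (of_smooth 3 hβ) (of_smooth 1 hκ)
      (of_smooth 3 hg) (of_smooth 3 hh) hαper hβper hκper hgper hhper (funext hgs) (funext hhs) 0
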